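/- Let J ⊆ I be ideals of A = ℤ[x₁,…,xₙ]. Let m be a positive integer that annihilates the torsion of A/J, i.e., every f ∈ A for which there exists a nonbrowsero integer k with k·f ∈ J satisfies m·f ∈ J. Let m = p₁^{α₁}⋯p_t^{α_t} be the factorization of m into powers of distinct primes p₁,…,p_t. Suppose (i) I and J generate the same ideal of ℚ[x₁,…,xₙ], and (ii) for each i = 1,…,t the ideals of (ℤ/p_i^{α_i}ℤ)[x₁,…,xₙ] generated by ι_{ℤ/p_i^{α_i}ℤ}(I) and ι_{ℤ/p_i^{α_i}ℤ}(J) are equal. Then I = J. -/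

import Mathlib

open MvPolynomial Finset

/-!
Let `f ∈ I`. Clearing denominators in the equality over `ℚ` gives a nonzero integer `k` with
`k f ∈ J` (`exists_int_mul_mem`). The equality modulo `q = pᵢ ^ αᵢ` gives `f ∈ J + qA`
(`mem_sup_span_of_map_le`), and since these prime powers are pairwise coprime, a Bézout argument
(`mem_sup_span_mul`) combines these memberships into `f ∈ J + mA`. Write `f = j + m a` with `j ∈ J`.
Then `m a = f - j ∈ I`, so `a` is torsion modulo `J`, hence `m a ∈ J` by the choice of `m`, and
`f ∈ J`.
-/

/-- Clearing denominators: `ℚ[x]` is the localization of `ℤ[x]` at the nonzero integers. -/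
lemma exists_int_mul_mem {σ : Type*} {I J : Ideal (MvPolynomial σ ℤ)}
    (hQ : Ideal.map (MvPolynomial.map (Int.castRingHom ℚ)) I ≤
      Ideal.map (MvPolynomial.map (Int.castRingHom ℚ)) J)
    {f : MvPolynomial σ ℤ} (hf : f ∈ I) : ∃ k : ℤ, k ≠ 0 ∧ C k * f ∈ J := by
  have h := hQ (Ideal.mem_map_of_mem _ hf)
  letI : Algebra (MvPolynomial σ ℤ) (MvPolynomial σ ℚ) := MvPolynomial.algebraMvPolynomial
  have hloc : IsLocalization ((nonZeroDivisors ℤ).map (C : ℤ →+* MvPolynomial σ ℤ))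
      (MvPolynomial σ ℚ) := MvPolynomial.isLocalization (nonZeroDivisors ℤ) ℚ
  obtain ⟨_, ⟨k, hk, rfl⟩, hkJ⟩ := (IsLocalization.algebraMap_mem_map_algebraMap_iff
    ((nonZeroDivisors ℤ).map (C : ℤ →+* MvPolynomial σ ℤ)) (MvPolynomial σ ℚ) J f).1 h
  exact ⟨k, nonZeroDivisors.ne_zero hk, hkJ⟩

lemma mem_sup_span_of_map_le {σ : Type*} {I J : Ideal (MvPolynomial σ ℤ)} (q : ℕ)
    (h : Ideal.map (MvPolynomial.map (Int.castRingHom (ZMod q))) I ≤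
      Ideal.map (MvPolynomial.map (Int.castRingHom (ZMod q))) J)
    {f : MvPolynomial σ ℤ} (hf : f ∈ I) :
    f ∈ J ⊔ Ideal.span {(q : MvPolynomial σ ℤ)} := by
  have h1 : f ∈ (J.map (MvPolynomial.map (Int.castRingHom (ZMod q)))).comap
      (MvPolynomial.map (Int.castRingHom (ZMod q))) := h (Ideal.mem_map_of_mem _ hf)
  rw [Ideal.comap_map_of_surjective' (MvPolynomial.map (Int.castRingHom (ZMod q)))
    (MvPolynomial.map_surjective _ (ZMod.ringHom_surjective _)), MvPolynomial.ker_map,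
    ZMod.ker_intCastRingHom, Ideal.map_span, Set.image_singleton] at h1
  simpa using h1

lemma mem_sup_span_mul {R : Type*} [CommRing R] {J : Ideal R} {a b f : R} (hab : IsCoprime a b)
    (ha : f ∈ J ⊔ Ideal.span {a}) (hb : f ∈ J ⊔ Ideal.span {b}) :
    f ∈ J ⊔ Ideal.span {a * b} := by
  simp only [Submodule.mem_sup, Ideal.mem_span_singleton'] at *
  obtain ⟨u, v, huv⟩ := hab
  obtain ⟨j₁, hj₁, _, ⟨r, rfl⟩, h₁⟩ := ha
  obtain ⟨j₂, hj₂, _, ⟨s, rfl⟩, h₂⟩ := hb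
  refine ⟨u * a * j₂ + v * b * j₁, J.add_mem (J.mul_mem_left _ hj₂) (J.mul_mem_left _ hj₁),
    _, ⟨u * s + v * r, rfl⟩, ?_⟩
  -- `f = u a f + v b f`, substituting `f = j₂ + s b` in the first term and `f = j₁ + r a` in the
  -- second.
  linear_combination f * huv + u * a * h₂ + v * b * h₁

/-- Main Lemma with prime power factorization: if `J ⊆ I` are ideals of `ℤ[x₁,…,xₙ]`,
`m > 0` annihilates the torsion of `A/J`, `m = p₁^{α₁}⋯p_t^{α_t}` is the factorization
of `m` into powers of distinct primes, the ideals generated by `I` and `J` in `ℚ[X]`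
agree, and for each `i` the ideals generated in `(ℤ/pᵢ^{αᵢ}ℤ)[X]` agree, then `I = J`. -/
theorem prime_power_version (n : ℕ) (I J : Ideal (MvPolynomial (Fin n) ℤ)) (hJI : J ≤ I)
    (m : ℕ) (hm : 0 < m)
    (htor : ∀ f : MvPolynomial (Fin n) ℤ,
      (∃ k : ℤ, k ≠ 0 ∧ C k * f ∈ J) → C (m : ℤ) * f ∈ J)
    (t : ℕ) (p : Fin t → ℕ) (α : Fin t → ℕ)
    (hp : ∀ i, Nat.Prime (p i)) (hα : ∀ i, 0 < α i)
    (hdist : ∀ i j, i ≠ j → p i ≠ p j)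
    (hprod : ∏ i, p i ^ α i = m)
    (hQ : Ideal.map (MvPolynomial.map (Int.castRingHom ℚ)) I =
          Ideal.map (MvPolynomial.map (Int.castRingHom ℚ)) J)
    (hmod : ∀ i, Ideal.map (MvPolynomial.map (Int.castRingHom (ZMod (p i ^ α i)))) I =
                 Ideal.map (MvPolynomial.map (Int.castRingHom (ZMod (p i ^ α i)))) J) :
    I = J := by
  refine le_antisymm (fun f hf => ?_) hJI
  have hcop : ∀ i j, i ≠ j → IsCoprime ((p i ^ α i : ℕ) : MvPolynomial (Fin n) ℤ)
      ((p j ^ α j : ℕ) : MvPolynomial (Fin n) ℤ) := fun i j hij =>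
    (((Nat.coprime_primes (hp i) (hp j)).2 (hdist i j hij)).pow _ _).cast
  have key : ∀ s : Finset (Fin t),
      f ∈ J ⊔ Ideal.span {∏ i ∈ s, ((p i ^ α i : ℕ) : MvPolynomial (Fin n) ℤ)} := by
    intro s
    induction s using Finset.induction_on with
    | empty => simp
    | insert i s his ih =>
      rw [Finset.prod_insert his]
      refine mem_sup_span_mul (IsCoprime.prod_right fun j hj => hcop i j ?_)
        (mem_sup_span_of_map_le _ (hmod i).le hf) ih
      rintro rfl
      exact his hj
  have hfm := key Finset.univ
  rw [← Nat.cast_prod, hprod] at hfm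
  obtain ⟨j, hj, _, hb, rfl⟩ := Submodule.mem_sup.1 hfm
  obtain ⟨a, rfl⟩ := Ideal.mem_span_singleton.1 hb
  refine J.add_mem hj ?_
  obtain ⟨k, hk, hkJ⟩ := exists_int_mul_mem hQ.le ((I.add_mem_iff_right (hJI hj)).1 hf)
  have := htor a ⟨k * m, mul_ne_zero hk (by exact_mod_cast hm.ne'), by
    simpa [mul_assoc] using hkJ⟩
  simpa using this
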